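/- Let p be a prime, q a power of p, k an algebraic closure of 𝔽_p, and σ : k → k the automorphism x ↦ x^q. Let M be a finite-dimensional k-vector space and F : M → M a σ-semilinear map. Then the map F − id : M → M is surjective: for every m ∈ M there exists x ∈ M with F(x) − x = m. -/

import Mathlib

/-!
Work modulo the image of `F - id`, where `v ≡ F v` and hence `v ≡ F^j v` for all `j`.
Since `M` is Noetherian, the orbit of `m` satisfies a relation `F^n m = ∑_{i < n} aᵢ F^i m`.
For every scalar `c` this gives
`c F^n m = ∑ c aᵢ F^i m ≡ ∑ F^(n-i) (c aᵢ F^i m) = (∑ σ^(n-i) (c aᵢ)) F^n m`,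
so `m ≡ F^n m ≡ 0` as soon as `c - ∑ σ^(n-i) (c aᵢ) = 1`. When `σ` is `x ↦ x ^ q` with `q = 0`
in `k`, this is a polynomial equation in `c` whose derivative is the constant `1`; it is
therefore separable and has a solution.
-/

theorem exists_mem_span_range_fin {R M : Type*} [Semiring R] [AddCommMonoid M] [Module R M]
    [IsNoetherian R M] (v : ℕ → M) :
    ∃ n, v n ∈ Submodule.span R (Set.range fun i : Fin n ↦ v i) := by
  let S : ℕ →o Submodule R M :=
    { toFun n := Submodule.span R (Set.range fun i : Fin n ↦ v i)
      monotone' _ _ hle := Submodule.span_mono <| Set.range_subset_iff.2 fun i ↦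
        ⟨i.castLE hle, rfl⟩ }
  obtain ⟨n, hn⟩ := WellFoundedGT.monotone_chain_condition S
  have hmem : v n ∈ S (n + 1) := Submodule.subset_span ⟨Fin.last n, rfl⟩
  rw [← hn (n + 1) n.le_succ] at hmem
  exact ⟨n, hmem⟩

section Semilinear

variable {R M : Type*} [Semiring R] {σ : R →+* R} [AddCommMonoid M] [Module R M]

theorem iterate_map_smulₛₗ (F : M →ₛₗ[σ] M) (j : ℕ) (c : R) (v : M) :
    F^[j] (c • v) = σ^[j] c • F^[j] v := by
  induction j with
  | zero => rfl
  | succ j ih => simp only [Function.iterate_succ_apply', ih, F.map_smulₛₗ]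

theorem map_eq_zero_of_iterate_eq_sum {A : Type*} [AddCancelCommMonoid A] {F : M →ₛₗ[σ] M}
    {π : M →+ A} (hπ : ∀ v, π (F v) = π v) {n : ℕ} {a : Fin n → R} {m : M}
    (hm : F^[n] m = ∑ i, a i • F^[i] m) {c : R}
    (hc : 1 + ∑ i : Fin n, σ^[n - i] (c * a i) = c) :
    π m = 0 := by
  have hπ_iterate (j : ℕ) (v : M) : π (F^[j] v) = π v := by
    induction j with
    | zero => rfl
    | succ j ih => rw [Function.iterate_succ_apply', hπ, ih]
  have hterm (i : Fin n) :
      π (σ^[n - i] (c * a i) • F^[n] m) = π ((c * a i) • F^[i] m) := by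
    rw [← hπ_iterate (n - i) ((c * a i) • F^[i] m), iterate_map_smulₛₗ,
      ← Function.iterate_add_apply, Nat.sub_add_cancel i.is_le']
  have hrel : π (c • F^[n] m) = π m + π (c • F^[n] m) :=
    calc π (c • F^[n] m)
      _ = π ((1 + ∑ i : Fin n, σ^[n - i] (c * a i)) • F^[n] m) := by rw [hc]
      _ = π m + ∑ i : Fin n, π (σ^[n - i] (c * a i) • F^[n] m) := by
        rw [add_smul, one_smul, map_add, hπ_iterate, Finset.sum_smul, map_sum]
      _ = π m + ∑ i : Fin n, π ((c * a i) • F^[i] m) := by simp only [hterm]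
      _ = π m + π (c • F^[n] m) := by simp only [hm, Finset.smul_sum, mul_smul, map_sum]
  exact right_eq_add.1 hrel

end Semilinear

theorem surjective_sub_id_of_exists_eq {R M : Type*} [Semiring R] {σ : R →+* R}
    [AddCommGroup M] [Module R M] [IsNoetherian R M] (F : M →ₛₗ[σ] M)
    (hσ : ∀ (n : ℕ) (a : Fin n → R), ∃ c, 1 + ∑ i : Fin n, σ^[n - i] (c * a i) = c) :
    Function.Surjective fun x ↦ F x - x := by
  intro m
  obtain ⟨n, hn⟩ := exists_mem_span_range_fin (R := R) fun i ↦ F^[i] m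
  obtain ⟨a, ha⟩ := (Submodule.mem_span_range_iff_exists_fun R).1 hn
  obtain ⟨c, hc⟩ := hσ n a
  let D : M →+ M := F.toAddMonoidHom - AddMonoidHom.id M
  have hmk (v : M) : QuotientAddGroup.mk' D.range (F v) = QuotientAddGroup.mk' D.range v :=
    QuotientAddGroup.eq_iff_sub_mem.2 ⟨v, rfl⟩
  exact (QuotientAddGroup.eq_zero_iff m).1 (map_eq_zero_of_iterate_eq_sum hmk ha.symm hc)

section SepClosed

open Polynomial

variable {k : Type*} [Field k] [IsSepClosed k]

theorem exists_eval_eq_self_of_derivative_eq_zero {f : k[X]} (hf : derivative f = 0) :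
    ∃ x, f.eval x = x := by
  have hderiv : derivative (f - X) = -1 := by rw [derivative_sub, hf, derivative_X, zero_sub]
  have hsep : (f - X).Separable := by
    rw [Polynomial.Separable, hderiv]
    exact isCoprime_one_right.neg_right
  have hdeg : (f - X).degree ≠ 0 := fun h ↦ by
    rw [eq_C_of_degree_eq_zero h, derivative_C] at hderiv
    exact neg_ne_zero.2 one_ne_zero hderiv.symm
  obtain ⟨x, hx⟩ := IsSepClosed.exists_root (f - X) hdeg hsep
  exact ⟨x, by simpa only [IsRoot, eval_sub, eval_X, sub_eq_zero] using hx⟩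

theorem exists_add_sum_mul_pow_eq {ι : Type*} [Fintype ι] (a : ι → k) {d : ι → ℕ}
    (hd : ∀ i, (d i : k) = 0) (b : k) : ∃ c, b + ∑ i, (c * a i) ^ d i = c := by
  let f : k[X] := C b + ∑ i, (X * C (a i)) ^ d i
  have hf : derivative f = 0 := by simp [f, derivative_pow, hd]
  obtain ⟨c, hc⟩ := exists_eval_eq_self_of_derivative_eq_zero hf
  refine ⟨c, ?_⟩
  simpa only [f, eval_add, eval_C, eval_finsetSum, eval_pow, eval_mul, eval_X] using hc

theorem semilinear_sub_id_surjective_general {q : ℕ} (hq : (q : k) = 0)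
    {σ : k →+* k} (hσ : ∀ x, σ x = x ^ q)
    {M : Type*} [AddCommGroup M] [Module k M] [FiniteDimensional k M] (F : M →ₛₗ[σ] M) :
    Function.Surjective fun x ↦ F x - x := by
  have hσ_iterate (j : ℕ) (x : k) : σ^[j] x = x ^ q ^ j := by
    rw [funext hσ, pow_iterate]
  refine surjective_sub_id_of_exists_eq F fun n a ↦ ?_
  have hq_pow (i : Fin n) : ((q ^ (n - i : ℕ) : ℕ) : k) = 0 := by
    rw [Nat.cast_pow, hq, zero_pow (Nat.sub_ne_zero_of_lt i.is_lt)]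
  simpa only [hσ_iterate] using exists_add_sum_mul_pow_eq a hq_pow 1

end SepClosed

/-- Let `p` be a prime, `q` a power of `p`, `k` an algebraic closure of `𝔽_p` and
`σ : k → k` the automorphism `x ↦ x ^ q`.  For any finite-dimensional `k`-vector space `M`
and any `σ`-semilinear map `F : M → M`, the map `F - id` is surjective. -/
theorem semilinear_sub_id_surjective
    (p : ℕ) [Fact p.Prime] (q e : ℕ) (he : 0 < e) (hq : q = p ^ e)
    (k : Type*) [Field k] [Algebra (ZMod p) k] [IsAlgClosure (ZMod p) k]
    (σ : k →+* k) (hσ : ∀ x : k, σ x = x ^ q)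
    (M : Type*) [AddCommGroup M] [Module k M] [FiniteDimensional k M]
    (F : M →ₛₗ[σ] M) :
    ∀ m : M, ∃ x : M, F x - x = m := by
  have : IsAlgClosed k := IsAlgClosure.isAlgClosed (ZMod p)
  have : CharP k p := charP_of_injective_algebraMap (algebraMap (ZMod p) k).injective p
  have hq_zero : (q : k) = 0 := by rw [hq, Nat.cast_pow, CharP.cast_eq_zero, zero_pow he.ne']
  exact semilinear_sub_id_surjective_general hq_zero hσ F
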